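/- For b ∈ ℂ, the twisted operators σ_b(L_m) = -tᵐD - (m/2)tᵐθ∂_θ - mb tᵐ, σ_b(H_m) = tᵐθ∂_θ - 2b tᵐ, σ_b(G^+_m) = -2tᵐθD - 4bm tᵐθ, σ_b(G^-_m) = tᵐ∂_θ in the Weyl superalgebra satisfy [σ_b(L_m), σ_b(G^+_n)] = (m/2 - n) σ_b(G^+_{m+n}) for all m, n ∈ ℤ. -/

import Mathlib

/-- `t^k` for `k : ℤ`, using `tinv` for negative powers. -/
noncomputable def tzpow {R : Type*} [Ring R] (t tinv : R) (k : ℤ) : R :=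
  if 0 ≤ k then t ^ k.toNat else tinv ^ (-k).toNat

/-- `σ_b(L_m) = -tᵐD - (m/2)tᵐθ∂_θ - mb tᵐ` with `D = t∂_t`. -/
noncomputable def sigL {R : Type*} [Ring R] [Algebra ℂ R] (t tinv dt th dth : R)
    (b : ℂ) (m : ℤ) : R :=
  -(tzpow t tinv m * (t * dt)) - ((m : ℂ) / 2) • (tzpow t tinv m * (th * dth))
    - ((m : ℂ) * b) • tzpow t tinv m

/-- `σ_b(G⁺_m) = -2tᵐθD - 4bm tᵐθ`. -/
noncomputable def sigGp {R : Type*} [Ring R] [Algebra ℂ R] (t tinv dt th dth : R)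
    (b : ℂ) (m : ℤ) : R :=
  (-2 : ℂ) • (tzpow t tinv m * (th * (t * dt))) - (4 * b * (m : ℂ)) • (tzpow t tinv m * th)

/-!
With `D = t∂_t` and `N = θ∂_θ`, the operators are `σ_b(L_m) = tᵐ (-D - (m/2) N - mb)` and
`σ_b(G⁺_n) = tⁿ (-2θ D - 4bn θ)`. Both have the form `tᵏ (a D + p)` with `a`, `p` in the commutant
of `t` and `D`. Moving `D` past `tᵏ` replaces it by `D + k`, which yields one bracket formula for
all such operators; it is evaluated with `N θ = θ` and `θ N = 0`.
-/

section FirstOrder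

variable {R : Type*} [Ring R] {u : Rˣ} {D a c p q : R}

theorem semiconjBy_units_zpow_add_zsmul (hD : SemiconjBy (u : R) (D + c) D)
    (hc : Commute (u : R) c) (k : ℤ) : SemiconjBy (↑(u ^ k) : R) (D + k • c) D := by
  have hshift (j : ℤ) : SemiconjBy (u : R) (D + (j + 1) • c) (D + j • c) := by
    have h := hD.add_right (hc.smul_right j)
    rwa [show D + c + j • c = D + (j + 1) • c by module] at h
  induction k using Int.induction_on with
  | zero => simp
  | succ i ih =>
    rw [zpow_add_one, Units.val_mul]
    exact ih.mul_left (hshift i)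
  | pred i ih =>
    rw [zpow_sub_one, Units.val_mul]
    have h := hshift (-i - 1)
    rw [sub_add_cancel] at h
    exact ih.mul_left h.units_inv_symm_left

theorem mul_add_mul_units_zpow (hD : SemiconjBy (u : R) (D + 1) D)
    (ha : Commute a u) (hp : Commute p u) (k : ℤ) :
    (a * D + p) * ↑(u ^ k) = ↑(u ^ k) * (a * D + k • a + p) := by
  have hDk : D * ↑(u ^ k) = ↑(u ^ k) * (D + k • 1) :=
    (semiconjBy_units_zpow_add_zsmul hD (Commute.one_right _) k).eq.symm
  have hak : a * ↑(u ^ k) = ↑(u ^ k) * a := (ha.units_zpow_right k).eq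
  have hpk : p * ↑(u ^ k) = ↑(u ^ k) * p := (hp.units_zpow_right k).eq
  rw [add_mul, mul_assoc, hDk, ← mul_assoc, hak, hpk]
  noncomm_ring

theorem mul_add_mul_mul_add (hc : Commute c D) (hq : Commute q D) :
    (a * D + p) * (c * D + q) = a * c * D * D + (a * q + p * c) * D + p * q := by
  have hDc : a * D * (c * D) = a * c * D * D := by
    rw [mul_assoc a D, ← mul_assoc D c, ← hc.eq]
    simp only [mul_assoc]
  have hDq : a * D * q = a * q * D := by
    rw [mul_assoc, ← hq.eq, mul_assoc]
  rw [add_mul, mul_add, mul_add, hDc, hDq]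
  noncomm_ring

theorem units_zpow_mul_mul_units_zpow_mul (hD : SemiconjBy (u : R) (D + 1) D)
    (ha : Commute a u) (hp : Commute p u) (hc : Commute c D) (hq : Commute q D) (m n : ℤ) :
    ↑(u ^ m) * (a * D + p) * (↑(u ^ n) * (c * D + q)) = ↑(u ^ (m + n)) *
      (a * c * D * D + (a * q + (n • a + p) * c) * D + (n • a + p) * q) := by
  rw [← mul_add_mul_mul_add hc hq, ← add_assoc, zpow_add, Units.val_mul, mul_assoc,
    ← mul_assoc (a * D + p), mul_add_mul_units_zpow hD ha hp]
  simp only [mul_assoc]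

theorem lie_units_zpow_mul_mul_add (hD : SemiconjBy (u : R) (D + 1) D)
    (ha : a ∈ Set.centralizer {(u : R), D}) (hp : p ∈ Set.centralizer {(u : R), D})
    (hc : c ∈ Set.centralizer {(u : R), D}) (hq : q ∈ Set.centralizer {(u : R), D}) (m n : ℤ) :
    ⁅(↑(u ^ m) * (a * D + p) : R), ↑(u ^ n) * (c * D + q)⁆ = ↑(u ^ (m + n)) *
      (⁅a, c⁆ * D * D + (n • (a * c) - m • (c * a) + ⁅a, q⁆ + ⁅p, c⁆) * D +
        (n • (a * q) - m • (c * p) + ⁅p, q⁆)) := by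
  have comm_u {x : R} (hx : x ∈ Set.centralizer {(u : R), D}) : Commute x u :=
    (hx u (by simp)).symm
  have comm_D {x : R} (hx : x ∈ Set.centralizer {(u : R), D}) : Commute x D :=
    (hx D (by simp)).symm
  rw [Ring.lie_def,
    units_zpow_mul_mul_units_zpow_mul hD (comm_u ha) (comm_u hp) (comm_D hc) (comm_D hq),
    units_zpow_mul_mul_units_zpow_mul hD (comm_u hc) (comm_u hq) (comm_D ha) (comm_D hp),
    add_comm n m, ← mul_sub]
  simp only [Ring.lie_def]
  noncomm_ring

end FirstOrder

section TwistedOperators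

variable {R : Type*} [Ring R]

theorem tzpow_units_inv (u : Rˣ) (k : ℤ) : tzpow (u : R) ↑u⁻¹ k = ↑(u ^ k) := by
  unfold tzpow
  split_ifs with hk
  · lift k to ℕ using hk
    simp
  · obtain ⟨n, rfl⟩ := Int.exists_eq_neg_ofNat (le_of_not_ge hk)
    simp

theorem semiconjBy_mul_add_one {t dt : R} (h : dt * t - t * dt = 1) :
    SemiconjBy t (t * dt + 1) (t * dt) := by
  rw [SemiconjBy, ← h, add_sub_cancel, mul_assoc]

theorem mem_centralizer_pair_mul {t dt x : R} (ht : Commute t x) (hdt : Commute dt x) :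
    x ∈ Set.centralizer {t, t * dt} := by
  rintro _ (rfl | rfl)
  exacts [ht, ht.mul_left hdt]

variable [Algebra ℂ R] (u : Rˣ) (dt th dth : R) (b : ℂ) (m : ℤ)

/-- The zeroth-order part `-(m/2) θ∂_θ - mb` of `σ_b(L_m)`, normalized so that
`σ_b(L_m) = tᵐ (-D + sigLPotential th dth b m)`. -/
noncomputable def sigLPotential : R :=
  -((m / 2 : ℂ) • (th * dth)) - (m * b) • 1

theorem sigL_units_inv : sigL (u : R) ↑u⁻¹ dt th dth b m =
    ↑(u ^ m) * (-1 * (u * dt) + sigLPotential th dth b m) := by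
  simp only [sigL, sigLPotential, tzpow_units_inv, mul_add, mul_sub, mul_neg, neg_mul, one_mul,
    mul_smul_comm, mul_one]
  abel

theorem sigGp_units_inv : sigGp (u : R) ↑u⁻¹ dt th dth b m =
    ↑(u ^ m) * ((-2 : ℂ) • th * (u * dt) + (-(4 * b * m)) • th) := by
  rw [sigGp, tzpow_units_inv, sub_eq_add_neg, ← neg_smul, mul_add, smul_mul_assoc, mul_smul_comm,
    mul_smul_comm]

variable {th dth}

theorem mul_sigLPotential (hsq : th * th = 0) :
    th * sigLPotential th dth b m = -(m * b) • th := by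
  have hN : th * (th * dth) = 0 := by rw [← mul_assoc, hsq, zero_mul]
  simp [sigLPotential, mul_sub, hN]

theorem lie_sigLPotential (hanti : dth * th + th * dth = 1) (hsq : th * th = 0) :
    ⁅sigLPotential th dth b m, th⁆ = -(m / 2 : ℂ) • th := by
  have hN : th * dth * th = th := by
    rw [mul_assoc, eq_sub_of_add_eq hanti, mul_sub, ← mul_assoc, hsq, zero_mul, mul_one, sub_zero]
  rw [Ring.lie_def, mul_sigLPotential b m hsq, sigLPotential, sub_mul, neg_mul, smul_mul_assoc,
    smul_mul_assoc, hN, one_mul]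
  module

theorem sigLPotential_mem {A : Subalgebra ℂ R} (hth : th ∈ A) (hdth : dth ∈ A) :
    sigLPotential th dth b m ∈ A :=
  A.sub_mem (A.neg_mem (A.smul_mem (A.mul_mem hth hdth) _)) (A.smul_mem A.one_mem _)

end TwistedOperators

/-- In the Weyl superalgebra, the twisted operators satisfy
`[σ_b(L_m), σ_b(G⁺_n)] = (m/2 - n) σ_b(G⁺_{m+n})`. -/
theorem stmt9 {R : Type*} [Ring R] [Algebra ℂ R] (t tinv dt th dth : R) (b : ℂ)
    (h1 : dt * t - t * dt = 1) (h2 : t * tinv = 1) (h3 : tinv * t = 1)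
    (h4 : dth * th + th * dth = 1) (h5 : th * th = 0) (h6 : dth * dth = 0)
    (h7 : t * th = th * t) (h8 : t * dth = dth * t)
    (h9 : dt * th = th * dt) (h10 : dt * dth = dth * dt)
    (h11 : tinv * th = th * tinv) (h12 : tinv * dth = dth * tinv) :
    ∀ m n : ℤ,
      sigL t tinv dt th dth b m * sigGp t tinv dt th dth b n
        - sigGp t tinv dt th dth b n * sigL t tinv dt th dth b m
      = ((m : ℂ) / 2 - n) • sigGp t tinv dt th dth b (m + n) := by
  intro m n
  lift t to Rˣ using ⟨⟨t, tinv, h2, h3⟩, rfl⟩ with u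
  obtain rfl : ↑u⁻¹ = tinv := Units.inv_eq_of_mul_eq_one_right h2
  let A := Subalgebra.centralizer ℂ {(u : R), u * dt}
  have hth : th ∈ A := mem_centralizer_pair_mul h7 h9
  have hdth : dth ∈ A := mem_centralizer_pair_mul h8 h10
  rw [← Ring.lie_def, sigL_units_inv, sigGp_units_inv, sigGp_units_inv, ← mul_smul_comm,
    lie_units_zpow_mul_mul_add (semiconjBy_mul_add_one h1) (A.neg_mem A.one_mem)
      (sigLPotential_mem b m hth hdth) (A.smul_mem hth _) (A.smul_mem hth _)]
  have lie_neg_one (x : R) : ⁅(-1 : R), x⁆ = 0 := (Commute.neg_one_left x).lie_eq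
  have lie_smul_th (z : ℂ) : ⁅sigLPotential th dth b m, z • th⁆ = z • -(m / 2 : ℂ) • th := by
    rw [← lie_sigLPotential b m h4 h5, Ring.lie_def, Ring.lie_def, smul_sub, mul_smul_comm,
      smul_mul_assoc]
  congr 1
  simp only [lie_neg_one, lie_smul_th, mul_sigLPotential b m h5, smul_mul_assoc, zero_mul,
    add_mul, sub_mul, neg_mul, one_mul, mul_neg, mul_one]
  push_cast
  module
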